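/- For every fixed lambda term M₀, the density among plain lambda terms of terms that do NOT contain M₀ as a subterm is 0: the sequence n ↦ (number of lambda terms t of size n such that M₀ is not a subterm of t) / L n converges to 0 as n → ∞. -/

import Mathlib

/-- Lambda terms with de Bruijn indices. -/
inductive Term : Type
  | var : ℕ → Term
  | app : Term → Term → Term
  | abs : Term → Term

namespace Term

/-- Natural size: every operator (zero, successor, application, abstraction) has size 1. -/
def size : Term → ℕ
  | var k => k + 1
  | app M N => M.size + N.size + 1
  | abs M => M.size + 1

end Term

/-- `L n` is the number of lambda terms of size `n`. -/
noncomputable def L (n : ℕ) : ℕ := Nat.card {t : Term // t.size = n}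


/-- Direct subterms: `M` is a direct subterm of `abs M`; `M` and `N` are direct
subterms of `app M N`. -/
inductive DirectSubterm : Term → Term → Prop
  | abs (M : Term) : DirectSubterm M (Term.abs M)
  | appLeft (M N : Term) : DirectSubterm M (Term.app M N)
  | appRight (M N : Term) : DirectSubterm N (Term.app M N)

/-- The subterm relation: reflexive-transitive closure of the direct-subterm relation. -/
def Subterm : Term → Term → Prop := Relation.ReflTransGen DirectSubterm

/-!
The generating function of all terms satisfies `S = z (1 / (1 - z) + S + S ^ 2)`, which has no real
solution for `ρ < z < 1`, where `ρ` is the root of the discriminant, `(1 - ρ) ^ 3 = 4 ρ ^ 2`; at `ρ`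
itself the solution is the double root `y = (1 - ρ) / (2 ρ)`.

A term avoids `M₀` iff it differs from `M₀` and its direct subterms avoid `M₀`, so the avoiding
terms satisfy the same recurrence except that one term of size `|M₀|` is missing. Hence at `ρ` the
number `y` is a strict supersolution of their equation, and by continuity it is still a
supersolution at some `z > ρ`. The avoiding terms thus number `O(z⁻ⁿ)`, whereas `L n` is at least
of order `w⁻ⁿ` for every `w > ρ`, because `L i * L j ≤ L (i + j + 1)`.
-/

section Sequences

open Finset Filter Asymptotics

theorem sum_range_sum_antidiagonal_mul_le {R : Type*} [Semiring R] [PartialOrder R]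
    [IsOrderedRing R] {f g : ℕ → R} (hf : ∀ n, 0 ≤ f n) (hg : ∀ n, 0 ≤ g n) (N : ℕ) :
    ∑ n ∈ range N, ∑ p ∈ antidiagonal n, f p.1 * g p.2 ≤
      (∑ n ∈ range N, f n) * ∑ n ∈ range N, g n := by
  have antidiagonal_eq_fiber : ∀ n ∈ range N,
      antidiagonal n = {p ∈ range N ×ˢ range N | p.1 + p.2 = n} := by
    intro n hn
    ext p
    simp only [mem_range, HasAntidiagonal.mem_antidiagonal, mem_filter, mem_product] at hn ⊢
    omega
  calc ∑ n ∈ range N, ∑ p ∈ antidiagonal n, f p.1 * g p.2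
      = ∑ n ∈ range N, ∑ p ∈ range N ×ˢ range N with p.1 + p.2 = n, f p.1 * g p.2 :=
        sum_congr rfl fun n hn ↦ by rw [antidiagonal_eq_fiber n hn]
    _ ≤ ∑ p ∈ range N ×ˢ range N, f p.1 * g p.2 :=
        sum_fiberwise_le_sum_of_sum_fiber_nonneg fun _ _ ↦
          sum_nonneg fun _ _ ↦ mul_nonneg (hf _) (hg _)
    _ = (∑ n ∈ range N, f n) * ∑ n ∈ range N, g n := by rw [sum_mul_sum, sum_product]

theorem sum_antidiagonal_mul_mul_pow {R : Type*} [CommSemiring R] (f g : ℕ → R) (z : R) (n : ℕ) :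
    (∑ p ∈ antidiagonal n, f p.1 * g p.2) * z ^ n =
      ∑ p ∈ antidiagonal n, (f p.1 * z ^ p.1) * (g p.2 * z ^ p.2) := by
  rw [sum_mul]
  refine sum_congr rfl fun p hp ↦ ?_
  rw [← HasAntidiagonal.mem_antidiagonal.1 hp, pow_add, mul_mul_mul_comm]

theorem sum_range_mul_pow_le_of_supersolution {a b : ℕ → ℝ} {z B y : ℝ} (ha : ∀ n, 0 ≤ a n)
    (ha₀ : a 0 = 0) (hrec : ∀ n, a (n + 1) ≤ b n + a n + ∑ p ∈ antidiagonal n, a p.1 * a p.2)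
    (hz : 0 ≤ z) (hB : ∀ N, ∑ n ∈ range N, b n * z ^ n ≤ B) (hy : 0 ≤ y)
    (hsuper : z * (B + y + y ^ 2) ≤ y) (N : ℕ) :
    ∑ n ∈ range N, a n * z ^ n ≤ y := by
  have terms_nonneg : ∀ n, 0 ≤ a n * z ^ n := fun n ↦ mul_nonneg (ha n) (pow_nonneg hz n)
  induction N with
  | zero => simpa using hy
  | succ N ih =>
    have conv_le : ∑ n ∈ range N, ∑ p ∈ antidiagonal n, (a p.1 * z ^ p.1) * (a p.2 * z ^ p.2) ≤
        y ^ 2 := by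
      refine (sum_range_sum_antidiagonal_mul_le terms_nonneg terms_nonneg N).trans ?_
      rw [← sq]
      exact pow_le_pow_left₀ (sum_nonneg fun n _ ↦ terms_nonneg n) ih 2
    calc ∑ n ∈ range (N + 1), a n * z ^ n
        = ∑ n ∈ range N, z * (a (n + 1) * z ^ n) := by
          rw [sum_range_succ', ha₀, zero_mul, add_zero]
          exact sum_congr rfl fun n _ ↦ by ring
      _ ≤ ∑ n ∈ range N,
            z * ((b n + a n + ∑ p ∈ antidiagonal n, a p.1 * a p.2) * z ^ n) := by
          gcongr with n
          exact hrec n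
      _ = z * (∑ n ∈ range N, b n * z ^ n + ∑ n ∈ range N, a n * z ^ n +
            ∑ n ∈ range N, ∑ p ∈ antidiagonal n, (a p.1 * z ^ p.1) * (a p.2 * z ^ p.2)) := by
          simp only [add_mul, sum_antidiagonal_mul_mul_pow, ← mul_sum, sum_add_distrib]
      _ ≤ z * (B + y + y ^ 2) := by gcongr; exact hB N
      _ ≤ y := hsuper

theorem tsum_mul_pow_eq_of_recurrence {a b : ℕ → ℝ} {z B : ℝ} (ha₀ : a 0 = 0)
    (hrec : ∀ n, a (n + 1) = b n + a n + ∑ p ∈ antidiagonal n, a p.1 * a p.2)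
    (hb : HasSum (fun n ↦ b n * z ^ n) B) (ha : Summable fun n ↦ a n * z ^ n) :
    ∑' n, a n * z ^ n = z * (B + ∑' n, a n * z ^ n + (∑' n, a n * z ^ n) ^ 2) := by
  have conv_hasSum : HasSum
      (fun n ↦ ∑ p ∈ antidiagonal n, (a p.1 * z ^ p.1) * (a p.2 * z ^ p.2))
      ((∑' n, a n * z ^ n) ^ 2) := by
    rw [sq, tsum_mul_tsum_eq_tsum_sum_antidiagonal_of_summable_norm ha.norm ha.norm]
    exact (summable_norm_sum_mul_antidiagonal_of_summable_norm ha.norm ha.norm).of_norm.hasSum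
  rw [← (((hb.add ha.hasSum).add conv_hasSum).mul_left z).tsum_eq, ha.tsum_eq_zero_add, ha₀,
    zero_mul, zero_add]
  refine tsum_congr fun n ↦ ?_
  rw [hrec, ← sum_antidiagonal_mul_mul_pow]
  ring

theorem exists_le_mul_pow_of_not_summable {a : ℕ → ℝ} {z w : ℝ} (ha : ∀ n, 0 ≤ a n) (hz : 0 ≤ z)
    (hzw : z < w) (hsum : ¬ Summable fun n ↦ a n * z ^ n) (C : ℝ) : ∃ n, C ≤ a n * w ^ n := by
  by_contra! hlt
  have hw : 0 < w := hz.trans_lt hzw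
  refine hsum (Summable.of_nonneg_of_le (fun n ↦ mul_nonneg (ha n) (pow_nonneg hz n)) (fun n ↦ ?_)
    ((summable_geometric_of_lt_one (by positivity) ((div_lt_one hw).2 hzw)).mul_left C))
  calc a n * z ^ n = a n * w ^ n * (z / w) ^ n := by
        rw [mul_assoc, ← mul_pow, mul_div_cancel₀ _ hw.ne']
    _ ≤ C * (z / w) ^ n := by gcongr; exact (hlt n).le

theorem exists_pos_forall_le_of_le_add {u : ℕ → ℝ} {k : ℕ} (hu : ∀ n, 0 < u n) (hk : 0 < k)
    (hstep : ∀ n, u n ≤ u (n + k)) : ∃ c > 0, ∀ n, c ≤ u n := by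
  obtain ⟨m, -, hm⟩ := exists_min_image (range k) u ⟨0, mem_range.2 hk⟩
  have le_add_mul : ∀ r q, u r ≤ u (r + k * q) := fun r q ↦ by
    induction q with
    | zero => rfl
    | succ q ih =>
      rw [mul_add_one, ← add_assoc]
      exact ih.trans (hstep _)
  refine ⟨u m, hu m, fun n ↦ ?_⟩
  calc u m ≤ u (n % k) := hm _ (mem_range.2 (Nat.mod_lt n hk))
    _ ≤ u (n % k + k * (n / k)) := le_add_mul _ _
    _ = u n := by rw [Nat.mod_add_div]

theorem isBigO_inv_pow_of_mul_pow_le {a : ℕ → ℝ} {z C : ℝ} (ha : ∀ n, 0 ≤ a n) (hz : 0 < z)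
    (hC : ∀ n, a n * z ^ n ≤ C) : a =O[atTop] fun n ↦ z⁻¹ ^ n := by
  refine .of_bound C (.of_forall fun n ↦ ?_)
  rw [Real.norm_of_nonneg (ha n), Real.norm_of_nonneg (by positivity), inv_pow, ← div_eq_mul_inv,
    le_div_iff₀ (by positivity)]
  exact hC n

end Sequences

section DominantSingularity

open Finset Filter Asymptotics

theorem exists_discriminant_root : ∃ ρ : ℝ, 0 < ρ ∧ ρ < 1 ∧ (1 - ρ) ^ 3 = 4 * ρ ^ 2 := by
  have ivt := intermediate_value_Ioo' (f := fun r : ℝ ↦ (1 - r) ^ 3 - 4 * r ^ 2) zero_le_one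
    (by fun_prop)
  obtain ⟨ρ, ⟨hρ₀, hρ₁⟩, hρ⟩ := ivt (show (0 : ℝ) ∈ _ by norm_num)
  exact ⟨ρ, hρ₀, hρ₁, sub_eq_zero.1 hρ⟩

theorem four_mul_sq_le_of_solution {z S : ℝ} (hz : z < 1) (hS : S = z * ((1 - z)⁻¹ + S + S ^ 2)) :
    4 * z ^ 2 ≤ (1 - z) ^ 3 := by
  have hpos : 0 < 1 - z := sub_pos.2 hz
  have disc_eq : discrim z (z - 1) (z * (1 - z)⁻¹) = (2 * z * S + (z - 1)) ^ 2 :=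
    discrim_eq_sq_of_quadratic_eq_zero (by linear_combination -hS)
  have disc_mul : (1 - z) * discrim z (z - 1) (z * (1 - z)⁻¹) = (1 - z) ^ 3 - 4 * z ^ 2 := by
    rw [discrim]
    field_simp
    ring
  rw [disc_eq] at disc_mul
  exact sub_nonneg.1 (disc_mul ▸ by positivity)

theorem double_root_eq {ρ : ℝ} (hρ₀ : 0 < ρ) (hρ₁ : ρ < 1) (hρ : (1 - ρ) ^ 3 = 4 * ρ ^ 2) :
    ρ * ((1 - ρ)⁻¹ + (1 - ρ) / (2 * ρ) + ((1 - ρ) / (2 * ρ)) ^ 2) = (1 - ρ) / (2 * ρ) := by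
  have : 1 - ρ ≠ 0 := by linarith
  field_simp
  linear_combination -hρ

theorem sum_range_ite_mul_pow_le {z : ℝ} (hz₀ : 0 ≤ z) (hz₁ : z < 1) (k N : ℕ) :
    ∑ n ∈ range N, (if n = k then 0 else 1) * z ^ n ≤ (1 - z)⁻¹ - z ^ k := by
  have hsum : HasSum (fun n ↦ (if n = k then 0 else 1) * z ^ n) ((1 - z)⁻¹ - z ^ k) := by
    have term_eq : (fun n ↦ (if n = k then 0 else 1) * z ^ n) =
        fun n ↦ z ^ n - if n = k then z ^ k else 0 := by
      funext n
      split_ifs with hn <;> simp [hn]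
    rw [term_eq]
    exact (hasSum_geometric_of_lt_one hz₀ hz₁).sub (hasSum_ite_eq k (z ^ k))
  exact sum_le_hasSum _ (fun n _ ↦ by positivity) hsum

theorem exists_isBigO_inv_pow_of_deficient_recurrence {ρ : ℝ} (hρ₀ : 0 < ρ) (hρ₁ : ρ < 1)
    (hρ : (1 - ρ) ^ 3 = 4 * ρ ^ 2) {a : ℕ → ℝ} {k : ℕ} (ha : ∀ n, 0 ≤ a n) (ha₀ : a 0 = 0)
    (hrec : ∀ n, a (n + 1) ≤
      (if n = k then 0 else 1) + a n + ∑ p ∈ antidiagonal n, a p.1 * a p.2) :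
    ∃ z > ρ, a =O[atTop] fun n ↦ z⁻¹ ^ n := by
  set y := (1 - ρ) / (2 * ρ)
  have hy₀ : 0 ≤ y := div_nonneg (by linarith) (by linarith)
  have strict_at_ρ : ρ * ((1 - ρ)⁻¹ - ρ ^ k + y + y ^ 2) < y := by
    have deficit_pos : 0 < ρ * ρ ^ k := by positivity
    linarith [double_root_eq hρ₀ hρ₁ hρ]
  have supersolution_near_ρ : ∀ᶠ z in nhds ρ, z * ((1 - z)⁻¹ - z ^ k + y + y ^ 2) < y := by
    have : 1 - ρ ≠ 0 := by linarith
    have hcont : ContinuousAt (fun z ↦ z * ((1 - z)⁻¹ - z ^ k + y + y ^ 2)) ρ := by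
      fun_prop (disch := assumption)
    exact hcont.eventually_lt_const strict_at_ρ
  obtain ⟨z, ⟨hz₁, hsuper⟩, hρz⟩ :=
    (((eventually_lt_nhds hρ₁).and supersolution_near_ρ).filter_mono nhdsWithin_le_nhds |>.and
      (eventually_mem_nhdsWithin (s := Set.Ioi ρ))).exists
  have hz₀ : 0 < z := hρ₀.trans hρz
  refine ⟨z, hρz, isBigO_inv_pow_of_mul_pow_le ha hz₀ (C := y) fun n ↦ ?_⟩
  calc a n * z ^ n ≤ ∑ i ∈ range (n + 1), a i * z ^ i :=
        single_le_sum (f := fun i ↦ a i * z ^ i)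
          (fun i _ ↦ mul_nonneg (ha i) (by positivity)) (self_mem_range_succ n)
    _ ≤ y := sum_range_mul_pow_le_of_supersolution ha ha₀ hrec hz₀.le
        (sum_range_ite_mul_pow_le hz₀.le hz₁ k) hy₀ hsuper.le _

end DominantSingularity

namespace Term

open Finset

theorem size_pos (t : Term) : 0 < t.size := by cases t <;> simp [size]

theorem size_lt_of_directSubterm {s t : Term} (h : DirectSubterm s t) : s.size < t.size := by
  cases h <;> simp only [size] <;> omega

theorem size_le_of_subterm {s t : Term} (h : Subterm s t) : s.size ≤ t.size := by
  induction h with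
  | refl => rfl
  | tail _ hdirect ih => exact ih.trans (size_lt_of_directSubterm hdirect).le

/-- All direct subterms of `t` satisfy `P`. Terms with this property are counted by the recurrence
obtained from the head constructor, for arbitrary `P`. -/
def OnChildren (P : Term → Prop) (t : Term) : Prop := ∀ s, DirectSubterm s t → P s

variable {P Q : Term → Prop}

theorem onChildren_var (k : ℕ) : OnChildren P (var k) := nofun

theorem onChildren_abs {M : Term} : OnChildren P (abs M) ↔ P M :=
  ⟨fun h ↦ h M (.abs M), fun h _ hs ↦ by cases hs; exact h⟩

theorem onChildren_app {M N : Term} : OnChildren P (app M N) ↔ P M ∧ P N :=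
  ⟨fun h ↦ ⟨h M (.appLeft M N), h N (.appRight M N)⟩,
    fun h _ hs ↦ by cases hs; exacts [h.1, h.2]⟩

theorem onChildren_true : OnChildren (fun _ ↦ True) = fun _ ↦ True := by
  funext t
  simp only [OnChildren, implies_true]

/-- The set of terms of size `n` that satisfy `P`, whose cardinality is `Term.count P n`. -/
def ofSize (P : Term → Prop) (n : ℕ) : Set Term := {t | P t ∧ t.size = n}

/-- The number of terms of size `n` that satisfy `P`: the common form of `L n` (`P` trivial) and of
the number of terms avoiding a given subterm. -/
noncomputable def count (P : Term → Prop) (n : ℕ) : ℕ := (ofSize P n).ncard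

theorem finite_setOf_size_le (n : ℕ) : {t : Term | t.size ≤ n}.Finite := by
  induction n with
  | zero => exact Set.finite_empty.subset fun t ht ↦ (size_pos t).not_ge ht
  | succ n ih =>
    refine ((((Set.finite_Iic n).image var).union (ih.image abs)).union
      (ih.image2 app ih)).subset ?_
    rintro (k | ⟨M, N⟩ | M) ht <;> simp only [Set.mem_ofPred_eq, size] at ht
    · exact .inl (.inl ⟨k, Nat.le_of_succ_le_succ ht, rfl⟩)
    · exact .inr ⟨M, show M.size ≤ n by omega, N, show N.size ≤ n by omega, rfl⟩
    · exact .inl (.inr ⟨M, Nat.le_of_succ_le_succ ht, rfl⟩)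

theorem finite_ofSize (P : Term → Prop) (n : ℕ) : (ofSize P n).Finite :=
  (finite_setOf_size_le n).subset fun _ ht ↦ ht.2.le

theorem count_mono (h : ∀ t, P t → Q t) (n : ℕ) : count P n ≤ count Q n :=
  Set.ncard_le_ncard (fun t ht ↦ ⟨h t ht.1, ht.2⟩) (finite_ofSize Q n)

theorem count_lt_count_size (h : ∀ t, P t → Q t) {t : Term} (hQ : Q t) (hP : ¬ P t) :
    count P t.size < count Q t.size :=
  Set.ncard_lt_ncard ⟨fun s hs ↦ ⟨h s hs.1, hs.2⟩, fun hsub ↦ hP (hsub ⟨hQ, rfl⟩).1⟩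
    (finite_ofSize Q _)

theorem count_zero (P : Term → Prop) : count P 0 = 0 := by
  rw [count, Set.ncard_eq_zero (finite_ofSize P 0)]
  exact Set.eq_empty_of_forall_notMem fun t ht ↦ (size_pos t).ne' ht.2

theorem ofSize_onChildren_succ (P : Term → Prop) (n : ℕ) :
    ofSize (OnChildren P) (n + 1) = insert (var n) (abs '' ofSize P n ∪
      app.uncurry '' ⋃ p ∈ antidiagonal n, ofSize P p.1 ×ˢ ofSize P p.2) := by
  ext t
  cases t with
  | var k => simp [ofSize, size, onChildren_var]
  | abs M => simp [ofSize, size, onChildren_abs]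
  | app M N => simp [ofSize, size, onChildren_app, and_assoc]

theorem ncard_iUnion_antidiagonal_ofSize (P : Term → Prop) (n : ℕ) :
    (⋃ p ∈ antidiagonal n, ofSize P p.1 ×ˢ ofSize P p.2).ncard =
      ∑ p ∈ antidiagonal n, count P p.1 * count P p.2 := by
  have disjoint_of_ne : (antidiagonal n : Set (ℕ × ℕ)).PairwiseDisjoint
      fun p ↦ ofSize P p.1 ×ˢ ofSize P p.2 := fun p _ q _ hpq ↦
    Set.disjoint_left.2 fun _ hp hq ↦
      hpq (Prod.ext (hp.1.2.symm.trans hq.1.2) (hp.2.2.symm.trans hq.2.2))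
  have ncard_eq := (antidiagonal n).finite_toSet.ncard_biUnion
    (fun p _ ↦ (finite_ofSize P p.1).prod (finite_ofSize P p.2)) disjoint_of_ne
  rw [finsum_mem_coe_finset] at ncard_eq
  simpa only [count, Set.ncard_prod, SetLike.mem_coe] using ncard_eq

theorem count_onChildren_succ (P : Term → Prop) (n : ℕ) :
    count (OnChildren P) (n + 1) =
      1 + count P n + ∑ p ∈ antidiagonal n, count P p.1 * count P p.2 := by
  have app_injective : Function.Injective app.uncurry := by
    rintro ⟨M₁, N₁⟩ ⟨M₂, N₂⟩ h
    simpa using h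
  have disjoint_abs_app : Disjoint (abs '' ofSize P n)
      (app.uncurry '' ⋃ p ∈ antidiagonal n, ofSize P p.1 ×ˢ ofSize P p.2) := by
    rw [Set.disjoint_left]
    rintro _ ⟨M, -, rfl⟩ ⟨⟨N₁, N₂⟩, -, h⟩
    simp at h
  have hfin := finite_ofSize (OnChildren P) (n + 1)
  rw [ofSize_onChildren_succ, Set.finite_insert, Set.finite_union] at hfin
  rw [count, ofSize_onChildren_succ, Set.ncard_insert_of_notMem (by simp) (hfin.1.union hfin.2),
    Set.ncard_union_eq disjoint_abs_app hfin.1 hfin.2,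
    Set.ncard_image_of_injective _ fun _ _ ↦ abs.inj, Set.ncard_image_of_injective _ app_injective,
    ncard_iUnion_antidiagonal_ofSize, ← count]
  ring

theorem L_eq_count (n : ℕ) : L n = count (fun _ ↦ True) n := by
  simp only [L, count, ofSize, true_and]
  rfl

theorem L_zero : L 0 = 0 := by rw [L_eq_count, count_zero]

theorem L_succ (n : ℕ) : L (n + 1) = 1 + L n + ∑ p ∈ antidiagonal n, L p.1 * L p.2 := by
  simp only [L_eq_count, ← count_onChildren_succ, onChildren_true]

theorem L_succ_pos (n : ℕ) : 0 < L (n + 1) := by rw [L_succ]; omega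

theorem L_mul_L_le (i j : ℕ) : L i * L j ≤ L (i + j + 1) := by
  rw [L_succ]
  have mem : (i, j) ∈ antidiagonal (i + j) := HasAntidiagonal.mem_antidiagonal.2 rfl
  exact (single_le_sum (f := fun p : ℕ × ℕ ↦ L p.1 * L p.2) (fun _ _ ↦ Nat.zero_le _) mem).trans
    (Nat.le_add_left _ _)

/-- The term `t` does not contain `M₀` as a subterm; in particular `M₀` does not avoid itself. -/
def Avoids (M₀ t : Term) : Prop := ¬ Subterm M₀ t

theorem Avoids.onChildren {M₀ t : Term} (h : Avoids M₀ t) : OnChildren (Avoids M₀) t :=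
  fun _ hs hsub ↦ h (hsub.tail hs)

theorem onChildren_avoids_self (M₀ : Term) : OnChildren (Avoids M₀) M₀ :=
  fun _ hs hsub ↦ (size_lt_of_directSubterm hs).not_ge (size_le_of_subterm hsub)

theorem not_avoids_self (M₀ : Term) : ¬ Avoids M₀ M₀ := not_not_intro .refl

theorem count_avoids_succ_le (M₀ : Term) (n : ℕ) :
    count (Avoids M₀) (n + 1) ≤ (if n + 1 = M₀.size then 0 else 1) + count (Avoids M₀) n +
      ∑ p ∈ antidiagonal n, count (Avoids M₀) p.1 * count (Avoids M₀) p.2 := by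
  have hrec := count_onChildren_succ (Avoids M₀) n
  split_ifs with hn
  · have hlt := count_lt_count_size (P := Avoids M₀) (fun _ ↦ Avoids.onChildren)
      (onChildren_avoids_self M₀) (not_avoids_self M₀)
    rw [← hn] at hlt
    omega
  · exact hrec ▸ count_mono (fun _ ↦ Avoids.onChildren) (n + 1)

open Filter Asymptotics

theorem not_summable_L_mul_pow {z : ℝ} (hz₀ : 0 ≤ z) (hz₁ : z < 1)
    (hz : (1 - z) ^ 3 < 4 * z ^ 2) : ¬ Summable fun n ↦ (L n : ℝ) * z ^ n := fun hsum ↦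
  hz.not_ge <| four_mul_sq_le_of_solution hz₁ <|
    tsum_mul_pow_eq_of_recurrence (b := fun _ ↦ 1) (by simp [L_zero])
      (fun n ↦ mod_cast L_succ n) (by simpa using hasSum_geometric_of_lt_one hz₀ hz₁) hsum

theorem exists_pos_forall_le_L_mul_pow {z w : ℝ} (hz₀ : 0 ≤ z) (hz₁ : z < 1)
    (hz : (1 - z) ^ 3 < 4 * z ^ 2) (hzw : z < w) : ∃ c > 0, ∀ n, c ≤ (L (n + 1) : ℝ) * w ^ n := by
  have hw : 0 < w := hz₀.trans_lt hzw
  obtain ⟨k, hk⟩ := exists_le_mul_pow_of_not_summable (fun n ↦ Nat.cast_nonneg (L n)) hz₀ hzw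
    (not_summable_L_mul_pow hz₀ hz₁ hz) w⁻¹
  have one_le : 1 ≤ (L k : ℝ) * w ^ (k + 1) := by
    rwa [pow_succ, ← mul_assoc, ← inv_le_iff_one_le_mul₀ hw]
  refine exists_pos_forall_le_of_le_add (k := k + 1)
    (fun n ↦ mul_pos (mod_cast L_succ_pos n) (pow_pos hw n)) k.succ_pos fun n ↦ ?_
  have supermul : (L k : ℝ) * L (n + 1) ≤ L (n + (k + 1) + 1) := by
    rw [show n + (k + 1) + 1 = k + (n + 1) + 1 by ring]
    exact_mod_cast L_mul_L_le k (n + 1)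
  calc (L (n + 1) : ℝ) * w ^ n
      ≤ (L k * w ^ (k + 1)) * (L (n + 1) * w ^ n) := le_mul_of_one_le_left (by positivity) one_le
    _ = (L k * L (n + 1)) * w ^ (n + (k + 1)) := by ring
    _ ≤ L (n + (k + 1) + 1) * w ^ (n + (k + 1)) := by gcongr

theorem inv_pow_isBigO_L {ρ w : ℝ} (hρ₀ : 0 < ρ) (hρ₁ : ρ < 1) (hρ : (1 - ρ) ^ 3 = 4 * ρ ^ 2)
    (hρw : ρ < w) : (fun n ↦ w⁻¹ ^ n) =O[atTop] fun n ↦ (L n : ℝ) := by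
  obtain ⟨z, hρz, hz⟩ := exists_between (lt_min hρw hρ₁)
  obtain ⟨hzw, hz₁⟩ := lt_min_iff.1 hz
  have hz₀ : 0 < z := hρ₀.trans hρz
  have hw : 0 < w := hz₀.trans hzw
  have disc_neg : (1 - z) ^ 3 < 4 * z ^ 2 := calc
    (1 - z) ^ 3 < (1 - ρ) ^ 3 := by gcongr
    _ = 4 * ρ ^ 2 := hρ
    _ < 4 * z ^ 2 := by gcongr
  obtain ⟨c, hc, hle⟩ := exists_pos_forall_le_L_mul_pow hz₀.le hz₁ disc_neg hzw
  refine .of_bound (c * w)⁻¹ ((eventually_ge_atTop 1).mono fun n hn ↦ ?_)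
  obtain ⟨n, rfl⟩ := Nat.exists_eq_add_of_le' hn
  rw [Real.norm_of_nonneg (by positivity), Real.norm_of_nonneg (by positivity), inv_pow,
    inv_le_iff_one_le_mul₀ (by positivity)]
  calc 1 = c⁻¹ * c := (inv_mul_cancel₀ hc.ne').symm
    _ ≤ c⁻¹ * (L (n + 1) * w ^ n) := by gcongr; exact hle n
    _ = (c * w)⁻¹ * L (n + 1) * w ^ (n + 1) := by rw [mul_inv, pow_succ]; field_simp

theorem exists_count_avoids_isBigO_inv_pow (M₀ : Term) {ρ : ℝ} (hρ₀ : 0 < ρ) (hρ₁ : ρ < 1)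
    (hρ : (1 - ρ) ^ 3 = 4 * ρ ^ 2) :
    ∃ z > ρ, (fun n ↦ (count (Avoids M₀) n : ℝ)) =O[atTop] fun n ↦ z⁻¹ ^ n := by
  obtain ⟨k, hk⟩ := Nat.exists_eq_succ_of_ne_zero (size_pos M₀).ne'
  have hrec := count_avoids_succ_le M₀
  simp only [hk, Nat.succ_inj] at hrec
  exact exists_isBigO_inv_pow_of_deficient_recurrence hρ₀ hρ₁ hρ (fun _ ↦ Nat.cast_nonneg _)
    (by rw [count_zero, Nat.cast_zero]) fun n ↦ mod_cast hrec n

end Term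

theorem density_avoiding_subterm_zero (M₀ : Term) :
    Filter.Tendsto
      (fun n : ℕ =>
        (Nat.card {t : Term // ¬ Subterm M₀ t ∧ t.size = n} : ℝ) / (L n : ℝ))
      Filter.atTop (nhds 0) := by
  obtain ⟨ρ, hρ₀, hρ₁, hρ⟩ := exists_discriminant_root
  obtain ⟨z, hρz, hA⟩ := Term.exists_count_avoids_isBigO_inv_pow M₀ hρ₀ hρ₁ hρ
  obtain ⟨w, hρw, hwz⟩ := exists_between hρz
  have hw : 0 < w := hρ₀.trans hρw
  have pow_isLittleO := isLittleO_pow_pow_of_lt_left (inv_nonneg.2 (hw.trans hwz).le)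
    (inv_strictAnti₀ hw hwz)
  exact ((hA.trans_isLittleO pow_isLittleO).trans_isBigO
    (Term.inv_pow_isBigO_L hρ₀ hρ₁ hρ hρw)).tendsto_div_nhds_zero
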